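/- Let q > 1 be a real number, λ a real number, and j ≤ φ natural numbers. Then Σ_{i=0}^{j} [j; i] (−1)^i q^{i(i−1)} γ(λ−2i, φ) = γ(2φ, j) · γ(λ−2j, φ−j) · q^{j(λ−2j)}. -/

import Mathlib

/-- The skew-q-nary Gaussian coefficient `[x;k]` for real `x`. -/
noncomputable def gaussQ (q x : ℝ) (k : ℕ) : ℝ :=
  ∏ i ∈ Finset.range k, (q ^ (2 * x) - q ^ (2 * (i : ℝ))) / (q ^ (2 * (k : ℝ)) - q ^ (2 * (i : ℝ)))

/-- The skew-q-nary Gamma function `γ(x,k)`. -/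
noncomputable def skewGamma (q x : ℝ) (k : ℕ) : ℝ :=
  ∏ i ∈ Finset.range k, (q ^ x - q ^ (2 * (i : ℝ)))

/-- The product `∏_{i<k} (x - b^i)`, the polynomial form of `skewGamma`. -/
noncomputable def gammaProd (b x : ℝ) (k : ℕ) : ℝ :=
  ∏ i ∈ Finset.range k, (x - b ^ i)

/-- The Gaussian binomial coefficient with base `b`. -/
noncomputable def gaussBinom (b : ℝ) (n k : ℕ) : ℝ :=
  gammaProd b (b ^ n) k / gammaProd b (b ^ k) k

theorem gammaProd_succ (b x : ℝ) (k : ℕ) :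
    gammaProd b x (k + 1) = gammaProd b x k * (x - b ^ k) :=
  Finset.prod_range_succ _ _

theorem gammaProd_mul_succ (b x : ℝ) (k : ℕ) :
    gammaProd b (b * x) (k + 1) = b ^ k * (b * x - 1) * gammaProd b x k := by
  induction k with
  | zero => simp [gammaProd]
  | succ k ih => rw [gammaProd_succ, ih, gammaProd_succ]; ring

theorem gammaProd_mul_sub_gammaProd (b x : ℝ) (k : ℕ) :
    gammaProd b (b * x) (k + 1) - gammaProd b x (k + 1)
      = x * (b ^ (k + 1) - 1) * gammaProd b x k := by
  rw [gammaProd_mul_succ, gammaProd_succ]; ring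

theorem gammaProd_pow_self_ne_zero {b : ℝ} (hb : 1 < b) (k : ℕ) :
    gammaProd b (b ^ k) k ≠ 0 := by
  refine Finset.prod_ne_zero_iff.mpr fun i hi => ?_
  exact (sub_pos.mpr (pow_lt_pow_right₀ hb (Finset.mem_range.mp hi))).ne'

theorem gaussBinom_zero_right (b : ℝ) (n : ℕ) : gaussBinom b n 0 = 1 := by
  simp [gaussBinom, gammaProd]

theorem gaussBinom_self_succ (b : ℝ) (n : ℕ) : gaussBinom b n (n + 1) = 0 := by
  simp [gaussBinom, gammaProd_succ b (b ^ n)]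

/-- The `q`-Pascal recursion. -/
theorem gaussBinom_succ_succ {b : ℝ} (hb : 1 < b) (n k : ℕ) :
    gaussBinom b (n + 1) (k + 1)
      = gaussBinom b n (k + 1) + b ^ n / b ^ k * gaussBinom b n k := by
  have hk := gammaProd_pow_self_ne_zero hb k
  have hpow : b ^ k ≠ 0 := by positivity
  have hsub : b * b ^ k - 1 ≠ 0 := by
    rw [← pow_succ']
    exact (sub_pos.mpr (one_lt_pow₀ hb k.succ_ne_zero)).ne'
  unfold gaussBinom
  rw [pow_succ' b n, pow_succ' b k, gammaProd_mul_succ, gammaProd_mul_succ, gammaProd_succ]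
  generalize hc : b * b ^ k - 1 = c at *
  field_simp
  linear_combination b ^ n * gammaProd b (b ^ n) k * hc

/-- The alternating Gaussian binomial sum is an iterated `q`-difference. -/
theorem sum_gaussBinom_succ {b : ℝ} (hb : 1 < b) (f : ℝ → ℝ) (n : ℕ) (x : ℝ) :
    ∑ i ∈ Finset.range (n + 2),
        gaussBinom b (n + 1) i * (-1) ^ i * b ^ i.choose 2 * f (x / b ^ i)
      = ∑ i ∈ Finset.range (n + 1),
          gaussBinom b n i * (-1) ^ i * b ^ i.choose 2 * f (x / b ^ i)
        - b ^ n * ∑ i ∈ Finset.range (n + 1),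
          gaussBinom b n i * (-1) ^ i * b ^ i.choose 2 * f (x / b / b ^ i) := by
  have hext : ∑ i ∈ Finset.range (n + 1),
        gaussBinom b n i * (-1) ^ i * b ^ i.choose 2 * f (x / b ^ i)
      = ∑ i ∈ Finset.range (n + 2),
        gaussBinom b n i * (-1) ^ i * b ^ i.choose 2 * f (x / b ^ i) := by
    rw [Finset.sum_range_succ _ (n + 1), gaussBinom_self_succ]; ring
  rw [hext, Finset.sum_range_succ', Finset.sum_range_succ' _ (n + 1), gaussBinom_zero_right,
    gaussBinom_zero_right, add_sub_right_comm, Finset.mul_sum, ← Finset.sum_sub_distrib]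
  congr 1
  refine Finset.sum_congr rfl fun i _ => ?_
  have hpow : b ^ i ≠ 0 := by positivity
  rw [gaussBinom_succ_succ hb, Nat.choose_succ_succ' i 1, Nat.choose_one_right, div_div,
    ← pow_succ', pow_add b i]
  field_simp
  ring

theorem sum_gaussBinom_gammaProd {b : ℝ} (hb : 1 < b) (n m : ℕ) (x : ℝ) :
    ∑ i ∈ Finset.range (n + 1),
        gaussBinom b n i * (-1) ^ i * b ^ i.choose 2 * gammaProd b (x / b ^ i) (n + m)
      = gammaProd b (b ^ (n + m)) n * gammaProd b (x / b ^ n) m * (x / b ^ n) ^ n := by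
  induction n generalizing m x with
  | zero => simp [gaussBinom_zero_right, gammaProd]
  | succ n ih =>
    have hb0 : b ≠ 0 := by positivity
    rw [sum_gaussBinom_succ hb (fun y => gammaProd b y (n + 1 + m)),
      show n + 1 + m = n + (m + 1) by ring, ih, ih, gammaProd_succ b _ n]
    obtain ⟨y, rfl⟩ : ∃ y, x = y * b ^ (n + 1) := ⟨x / b ^ (n + 1), by field_simp⟩
    have h1 : y * b ^ (n + 1) / b ^ n = b * y := by rw [pow_succ]; field_simp
    have h2 : y * b ^ (n + 1) / b / b ^ n = y := by rw [pow_succ]; field_simp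
    have h3 : y * b ^ (n + 1) / b ^ (n + 1) = y := by field_simp
    rw [h1, h2, h3]
    linear_combination gammaProd b (b ^ (n + (m + 1))) n * b ^ n * y ^ n *
      gammaProd_mul_sub_gammaProd b y m

theorem rpow_two_mul_natCast {q : ℝ} (hq : 0 ≤ q) (n : ℕ) :
    q ^ (2 * (n : ℝ)) = (q ^ 2) ^ n := by
  rw [Real.rpow_mul hq, Real.rpow_natCast, Real.rpow_two]

theorem skewGamma_eq_gammaProd {q : ℝ} (hq : 0 ≤ q) (x : ℝ) (k : ℕ) :
    skewGamma q x k = gammaProd (q ^ 2) (q ^ x) k := by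
  simp only [skewGamma, gammaProd, rpow_two_mul_natCast hq]

theorem gaussQ_natCast {q : ℝ} (hq : 0 ≤ q) (n k : ℕ) :
    gaussQ q n k = gaussBinom (q ^ 2) n k := by
  simp only [gaussQ, gaussBinom, gammaProd, rpow_two_mul_natCast hq, Finset.prod_div_distrib]

theorem stmt14 (q : ℝ) (hq : 1 < q) (lam : ℝ) (j φ : ℕ) (hj : j ≤ φ) :
    (∑ i ∈ Finset.range (j + 1),
        gaussQ q (j : ℝ) i * (-1 : ℝ) ^ i * q ^ (i * (i - 1)) * skewGamma q (lam - 2 * (i : ℝ)) φ)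
      = skewGamma q (2 * (φ : ℝ)) j * skewGamma q (lam - 2 * (j : ℝ)) (φ - j) *
          q ^ ((j : ℝ) * (lam - 2 * (j : ℝ))) := by
  obtain ⟨m, rfl⟩ := Nat.exists_eq_add_of_le hj
  have hq0 : 0 < q := by positivity
  have hshift (i : ℕ) : q ^ (lam - 2 * (i : ℝ)) = q ^ lam / (q ^ 2) ^ i := by
    rw [Real.rpow_sub hq0, rpow_two_mul_natCast hq0.le]
  have hchoose (i : ℕ) : q ^ (i * (i - 1)) = (q ^ 2) ^ i.choose 2 := by
    rw [← pow_mul, Nat.choose_two_right, Nat.mul_div_cancel' i.even_mul_pred_self.two_dvd]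
  have hlast : q ^ ((j : ℝ) * (lam - 2 * (j : ℝ))) = (q ^ lam / (q ^ 2) ^ j) ^ j := by
    rw [mul_comm, Real.rpow_mul hq0.le, Real.rpow_natCast, hshift]
  simp only [skewGamma_eq_gammaProd hq0.le, gaussQ_natCast hq0.le, hchoose, hlast, hshift,
    rpow_two_mul_natCast hq0.le, Nat.add_sub_cancel_left]
  exact sum_gaussBinom_gammaProd (one_lt_pow₀ hq two_ne_zero) j m (q ^ lam)
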